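/- Let D ⊆ {−1,1}^n, f : D → {−1,1}, ε ≥ 0, and t ∈ ℕ. Suppose φ : {−1,1}^n → ℝ satisfies Σ_{x ∈ {−1,1}^n} |φ(x)| = 1 and −w + Σ_{x ∈ D} f(x) φ(x) − Σ_{x ∉ D} |φ(x)| > 2ε, where w := 2^n · sqrt( Σ_{i ∈ [n+1]^t} φ̂(S_i)² ) and for a tuple i ∈ [n+1]^t, S_i ⊆ [n] is the set of indices k ∈ [n] occurring an odd number of times in i. Then there is no t-tensor T ∈ ℝ^{(n+1)×⋯×(n+1)} with ‖T‖_cb ≤ 1 and |T((x,1),…,(x,1)) − f(x)| ≤ 2ε for all x ∈ D; that is, cbdeg_ε(f) > t. -/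

import Mathlib

/-!
The certificate is weak duality for the pairing `∑ x, φ x * T((x,1),…,(x,1))`.

Expanding `T` over tuples and using that the monomial of a tuple `i` is the character of the set
`S_i` (`prod_extOne`), the pairing equals `2 ^ n * ∑ i, T i * φ̂(S_i)`. By Cauchy–Schwarz this is at
most `w * ‖T‖₂`, and `‖T‖₂ ≤ ‖T‖_cb` (`sum_sq_le_one`): let `U_j(k)` be the permutation matrix of the
translation by `k` in the `j`-th coordinate of the finite group `(ℤ/(n+1))^t`. Then
`U_1(i_1)⋯U_t(i_t)` sends the basis vector `e_0` to `e_i`, so the operator attached to `T` sends the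
unit vector `e_0` to `∑ i, T i • e_i`, a vector of length `‖T‖₂`.

In the other direction, `|T((x,1),…,(x,1))| ≤ ‖T‖_cb ≤ 1` for every `x` (take `1 × 1` orthogonal
matrices, `abs_evalT_le_one`). Together with the approximation of `f` on `D` and `‖φ‖₁ = 1`, the
pairing is at least `∑_D f φ - 2ε - ∑_{Dᶜ} |φ|`, which exceeds `w` by assumption.
-/

open Matrix

/-- Concatenation of a tuple in `[n]^ℓ` with a tuple in `[n]^m`, viewed as a tuple in `[n]^t`
via the identity `ℓ + m = t`. -/
def tapp {n ℓ m t : ℕ} (h : ℓ + m = t) (i : Fin ℓ → Fin n) (j : Fin m → Fin n) :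
    Fin t → Fin n :=
  fun q => Fin.append i j (Fin.cast h.symm q)

/-- The ordered matrix product `U 0 (i 0) * U 1 (i 1) * ⋯ * U (t-1) (i (t-1))`. -/
def prodU {n t d : ℕ} (U : Fin t → Fin n → Matrix (Fin d) (Fin d) ℝ)
    (i : Fin t → Fin n) : Matrix (Fin d) (Fin d) ℝ :=
  (List.ofFn fun j => U j (i j)).prod

/-- The spectral (operator) norm of a real `d × d` matrix. -/
noncomputable def specNorm {d : ℕ} (A : Matrix (Fin d) (Fin d) ℝ) : ℝ :=
  ‖(Matrix.toEuclideanCLM (𝕜 := ℝ) A)‖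

/-- The completely bounded norm of a `t`-tensor `T` acting on `ℝ^n`:
`sup ‖∑_{i ∈ [n]^t} T_i U_1(i_1)⋯U_t(i_t)‖` over all `d ∈ ℕ` and orthogonal matrices
`U_j(i) ∈ O(d)`. -/
noncomputable def cbNorm (n t : ℕ) (T : (Fin t → Fin n) → ℝ) : ℝ :=
  sSup { r | ∃ d : ℕ, ∃ U : Fin t → Fin n → Matrix (Fin d) (Fin d) ℝ,
    (∀ j i, (U j i)ᵀ * U j i = 1) ∧
    r = specNorm (∑ i : Fin t → Fin n, T i • prodU U i) }

/-- The sign `±1` associated to a Boolean; `{-1,1}^n` is identified with `Fin n → Bool`. -/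
def sgn (b : Bool) : ℝ := if b then 1 else -1

/-- For `x ∈ {-1,1}^n`, the vector `z = (x, 1) ∈ ℝ^{n+1}` obtained by appending a `1`. -/
noncomputable def extOne {n : ℕ} (x : Fin n → Bool) : Fin (n + 1) → ℝ :=
  Fin.snoc (fun k => sgn (x k)) 1

/-- The evaluation `T((x,1),…,(x,1)) = ∑_{i ∈ [n+1]^t} T_i z_{i_1}⋯z_{i_t}` with `z = (x,1)`. -/
noncomputable def evalT {n t : ℕ} (T : (Fin t → Fin (n + 1)) → ℝ) (x : Fin n → Bool) : ℝ :=
  ∑ i : Fin t → Fin (n + 1), T i * ∏ j, extOne x (i j)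

/-- The Fourier coefficient `φ̂(S) = 2^{-n} ∑_{x ∈ {-1,1}^n} φ(x) ∏_{k ∈ S} x_k`. -/
noncomputable def fourierB {n : ℕ} (φ : (Fin n → Bool) → ℝ) (S : Finset (Fin n)) : ℝ :=
  (∑ x : Fin n → Bool, φ x * ∏ k ∈ S, sgn (x k)) / 2 ^ n

/-- For a tuple `i ∈ [n+1]^t`, the set `S_i ⊆ [n]` of indices `k ∈ [n]` occurring an odd
number of times in `i` (occurrences of the extra index `n+1` are ignored). -/
def oddSet {n t : ℕ} (i : Fin t → Fin (n + 1)) : Finset (Fin n) :=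
  Finset.univ.filter fun k =>
    Odd (Finset.univ.filter fun j => i j = Fin.castSucc k).card

/-! ### Lower bounds for the completely bounded norm -/

lemma specNorm_orth_le_one {d : ℕ} (A : Matrix (Fin d) (Fin d) ℝ) (h : Aᵀ * A = 1) :
    specNorm A ≤ 1 := by
  have hA : A ∈ Matrix.orthogonalGroup (Fin d) ℝ := by
    rw [Matrix.mem_orthogonalGroup_iff']
    simpa [Matrix.star_eq_conjTranspose] using h
  have hu : toEuclideanCLM (𝕜 := ℝ) A ∈ unitary _ := Unitary.map_mem (toEuclideanCLM (𝕜 := ℝ)) hA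
  -- The C⋆-identity also covers `d = 0`, where the identity has norm `0`.
  have hsq : specNorm A * specNorm A ≤ 1 := by
    unfold specNorm
    rw [← CStarRing.norm_star_mul_self, (Unitary.mem_iff.1 hu).1]
    exact ContinuousLinearMap.norm_id_le
  nlinarith

lemma orth_list_prod {d : ℕ} (l : List (Matrix (Fin d) (Fin d) ℝ))
    (h : ∀ A ∈ l, Aᵀ * A = 1) : l.prodᵀ * l.prod = 1 := by
  induction l with
  | nil => simp
  | cons A l ih =>
    have h1 := h A (by simp)
    have h2 := ih fun B hB => h B (by simp [hB])
    rw [List.prod_cons, Matrix.transpose_mul, Matrix.mul_assoc, ← Matrix.mul_assoc Aᵀ, h1,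
      Matrix.one_mul, h2]

/-- The set defining `cbNorm` is bounded above (by `∑ i, |T i|`), so its supremum dominates each
of its members. -/
lemma specNorm_le_cbNorm {n t d : ℕ} (T : (Fin t → Fin n) → ℝ)
    (U : Fin t → Fin n → Matrix (Fin d) (Fin d) ℝ) (hU : ∀ j i, (U j i)ᵀ * U j i = 1) :
    specNorm (∑ i : Fin t → Fin n, T i • prodU U i) ≤ cbNorm n t T := by
  refine le_csSup ⟨∑ i, |T i|, ?_⟩ ⟨d, U, hU, rfl⟩
  rintro r ⟨d', V, hV, rfl⟩
  unfold specNorm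
  rw [map_sum]
  refine (norm_sum_le _ _).trans (Finset.sum_le_sum fun i _ => ?_)
  rw [map_smul, norm_smul, Real.norm_eq_abs]
  refine mul_le_of_le_one_right (abs_nonneg _) (specNorm_orth_le_one _ (orth_list_prod _ ?_))
  intro A hA
  obtain ⟨j, rfl⟩ := (List.mem_ofFn' _ _).1 hA
  exact hV _ _

lemma column_sq_le {d : ℕ} (A : Matrix (Fin d) (Fin d) ℝ) (c : Fin d) :
    ∑ r, A r c ^ 2 ≤ specNorm A ^ 2 := by
  have h := (toEuclideanCLM (𝕜 := ℝ) A).le_opNorm (EuclideanSpace.single c 1)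
  rw [PiLp.norm_single, norm_one, mul_one] at h
  have h2 := pow_le_pow_left₀ (norm_nonneg _) h 2
  rw [EuclideanSpace.norm_sq_eq] at h2
  refine le_trans (le_of_eq ?_) h2
  refine Finset.sum_congr rfl fun r _ => ?_
  have : (toEuclideanCLM (𝕜 := ℝ) A (EuclideanSpace.single c 1)) r = A r c := by
    simp [Matrix.ofLp_toEuclideanCLM]
  rw [this, Real.norm_eq_abs, sq_abs]

lemma specNorm_nonneg {d : ℕ} (A : Matrix (Fin d) (Fin d) ℝ) : 0 ≤ specNorm A := norm_nonneg _

lemma column_sq_le_one {n t d : ℕ} (T : (Fin t → Fin n) → ℝ) (hT : cbNorm n t T ≤ 1)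
    (U : Fin t → Fin n → Matrix (Fin d) (Fin d) ℝ) (hU : ∀ j i, (U j i)ᵀ * U j i = 1)
    (c : Fin d) : ∑ r, (∑ i : Fin t → Fin n, T i • prodU U i) r c ^ 2 ≤ 1 :=
  (column_sq_le _ c).trans
    (pow_le_one₀ (specNorm_nonneg _) ((specNorm_le_cbNorm T U hU).trans hT))

lemma extOne_mul_self {n : ℕ} (x : Fin n → Bool) (k : Fin (n + 1)) :
    extOne x k * extOne x k = 1 := by
  refine Fin.lastCases ?_ (fun k => ?_) k
  · simp [extOne]
  · simp only [extOne, Fin.snoc_castSucc, sgn]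
    split <;> norm_num

lemma abs_evalT_le_one {n t : ℕ} (T : (Fin t → Fin (n + 1)) → ℝ)
    (hT : cbNorm (n + 1) t T ≤ 1) (x : Fin n → Bool) : |evalT T x| ≤ 1 := by
  have h := column_sq_le_one (d := 1) T hT (fun _ k => Matrix.scalar (Fin 1) (extOne x k))
    (fun _ k => by
      rw [Matrix.scalar_apply, Matrix.diagonal_transpose, Matrix.diagonal_mul_diagonal]
      simp [extOne_mul_self]) 0
  have hp : ∀ i : Fin t → Fin (n + 1),
      prodU (fun _ k => Matrix.scalar (Fin 1) (extOne x k)) i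
        = Matrix.scalar (Fin 1) (∏ j, extOne x (i j)) := by
    intro i
    rw [← List.prod_ofFn, map_list_prod, List.map_ofFn]
    rfl
  simp only [hp] at h
  rw [← sq_le_one_iff_abs_le_one]
  simpa [Matrix.sum_apply, evalT] using h

/-- The regular representation of a finite additive group `X`, by permutation matrices, with the
basis vectors numbered through `e`. -/
noncomputable def regRep {X : Type} [AddCommGroup X] [DecidableEq X] {d : ℕ} (e : X ≃ Fin d) :
    Multiplicative X →* Matrix (Fin d) (Fin d) ℝ where
  toFun x := Matrix.of fun a b => if e.symm a = x.toAdd + e.symm b then 1 else 0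
  map_one' := by
    ext a b
    simp [Matrix.one_apply]
  map_mul' x y := by
    ext a b
    rw [Matrix.mul_apply, Finset.sum_eq_single (e (y.toAdd + e.symm b))]
    · simp [add_assoc]
    · intro c _ hc
      have : ¬ e.symm c = y.toAdd + e.symm b := fun h => hc (by rw [← h, e.apply_symm_apply])
      simp [this]
    · simp

lemma regRep_apply {X : Type} [AddCommGroup X] [DecidableEq X] {d : ℕ} (e : X ≃ Fin d)
    (x : Multiplicative X) (a b : Fin d) :
    regRep e x a b = if e.symm a = x.toAdd + e.symm b then 1 else 0 := rfl

lemma regRep_orth {X : Type} [AddCommGroup X] [DecidableEq X] {d : ℕ} (e : X ≃ Fin d)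
    (x : Multiplicative X) : (regRep e x)ᵀ * regRep e x = 1 := by
  have h : (regRep e x)ᵀ = regRep e x⁻¹ := by
    ext a b
    rw [Matrix.transpose_apply, regRep_apply, regRep_apply]
    refine if_congr ?_ rfl rfl
    rw [toAdd_inv, eq_neg_add_iff_add_eq, eq_comm]
  rw [h, ← map_mul, inv_mul_cancel, map_one]

/-- The completely bounded unit ball lies in the Euclidean one: the column at `0` of the operator
built from coordinate translations of `Fin t → Fin (n + 1)` lists the entries of `T`. -/
lemma sum_sq_le_one {n t : ℕ} (T : (Fin t → Fin (n + 1)) → ℝ)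
    (hT : cbNorm (n + 1) t T ≤ 1) : ∑ i, T i ^ 2 ≤ 1 := by
  let e := Fintype.equivFin (Fin t → Fin (n + 1))
  have h := column_sq_le_one T hT
    (fun j k => regRep e (Multiplicative.ofAdd (Pi.single j k))) (fun _ _ => regRep_orth _ _) (e 0)
  have hp : ∀ i : Fin t → Fin (n + 1),
      prodU (fun j k => regRep e (Multiplicative.ofAdd (Pi.single j k))) i
        = regRep e (Multiplicative.ofAdd i) := by
    intro i
    have hi : Multiplicative.ofAdd i
        = ∏ j, Multiplicative.ofAdd (Pi.single j (i j) : Fin t → Fin (n + 1)) := by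
      rw [← ofAdd_sum, Finset.univ_sum_single]
    rw [hi, ← List.prod_ofFn, map_list_prod, List.map_ofFn]
    rfl
  simp only [hp] at h
  rw [← e.sum_comp] at h
  simpa [Matrix.sum_apply, regRep_apply] using h

/-! ### The pairing with the dual witness -/

lemma sgn_pow (b : Bool) (m : ℕ) : sgn b ^ m = if Odd m then sgn b else 1 := by
  cases b
  · by_cases h : Odd m
    · simp [sgn, h, h.neg_one_pow]
    · simp [sgn, h, (Nat.not_odd_iff_even.1 h).neg_one_pow]
  · simp [sgn]

lemma prod_extOne {n t : ℕ} (x : Fin n → Bool) (i : Fin t → Fin (n + 1)) :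
    ∏ j, extOne x (i j) = ∏ k ∈ oddSet i, sgn (x k) := by
  rw [← Finset.prod_fiberwise Finset.univ i, Fin.prod_univ_castSucc]
  have hlast : ∏ j with i j = Fin.last n, extOne x (i j) = 1 := by
    refine Finset.prod_eq_one fun j hj => ?_
    rw [(Finset.mem_filter.1 hj).2]
    simp [extOne]
  rw [hlast, mul_one, oddSet, Finset.prod_filter]
  refine Finset.prod_congr rfl fun k _ => ?_
  rw [← sgn_pow, ← Finset.prod_const]
  refine Finset.prod_congr rfl fun j hj => ?_
  rw [(Finset.mem_filter.1 hj).2]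
  simp [extOne]

lemma pairing_eq {n t : ℕ} (T : (Fin t → Fin (n + 1)) → ℝ) (φ : (Fin n → Bool) → ℝ) :
    ∑ x, φ x * evalT T x = 2 ^ n * ∑ i, T i * fourierB φ (oddSet i) := by
  simp only [evalT, prod_extOne, Finset.mul_sum, fourierB]
  rw [Finset.sum_comm]
  refine Finset.sum_congr rfl fun i _ => ?_
  rw [mul_left_comm, mul_div_cancel₀ _ (by positivity), Finset.mul_sum]
  exact Finset.sum_congr rfl fun x _ => by ring

/-- A second-order cone certificate: if `φ : {-1,1}^n → ℝ` has unit
`ℓ₁`-norm and, with `w = 2^n √(∑_{i ∈ [n+1]^t} φ̂(S_i)²)`, the objective value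
`-w + ∑_{x ∈ D} f(x)φ(x) - ∑_{x ∉ D} |φ(x)|` exceeds `2ε`, then there is no `t`-tensor `T`
on `ℝ^{n+1}` with `‖T‖_cb ≤ 1` approximating `f` on `D` up to `2ε`; that is,
`cbdeg_ε(f) > t`. -/
theorem stmt_16 (n t : ℕ) (D : Finset (Fin n → Bool)) (f : (Fin n → Bool) → ℝ)
    (hf : ∀ x ∈ D, f x = 1 ∨ f x = -1) (ε : ℝ) (hε : 0 ≤ ε)
    (φ : (Fin n → Bool) → ℝ)
    (hnorm : ∑ x : Fin n → Bool, |φ x| = 1)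
    (hobj : 2 * ε <
      -(2 ^ n * Real.sqrt (∑ i : Fin t → Fin (n + 1), fourierB φ (oddSet i) ^ 2))
        + ∑ x ∈ D, f x * φ x - ∑ x ∈ Dᶜ, |φ x|) :
    ¬ ∃ T : (Fin t → Fin (n + 1)) → ℝ,
        cbNorm (n + 1) t T ≤ 1 ∧ ∀ x ∈ D, |evalT T x - f x| ≤ 2 * ε := by
  rintro ⟨T, hT, happ⟩
  have hup : ∑ x, φ x * evalT T x
      ≤ 2 ^ n * Real.sqrt (∑ i : Fin t → Fin (n + 1), fourierB φ (oddSet i) ^ 2) := by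
    rw [pairing_eq]
    refine mul_le_mul_of_nonneg_left ?_ (by positivity)
    refine (Real.sum_mul_le_sqrt_mul_sqrt _ _ _).trans ?_
    exact mul_le_of_le_one_left (Real.sqrt_nonneg _) (Real.sqrt_le_one.2 (sum_sq_le_one T hT))
  have hD : ∑ x ∈ D, f x * φ x - 2 * ε * ∑ x ∈ D, |φ x| ≤ ∑ x ∈ D, φ x * evalT T x := by
    rw [Finset.mul_sum, ← Finset.sum_sub_distrib]
    refine Finset.sum_le_sum fun x hx => ?_
    have h1 : |φ x * (evalT T x - f x)| ≤ |φ x| * (2 * ε) := by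
      rw [abs_mul]
      exact mul_le_mul_of_nonneg_left (happ x hx) (abs_nonneg _)
    linarith [(abs_le.1 h1).1]
  have hDc : -∑ x ∈ Dᶜ, |φ x| ≤ ∑ x ∈ Dᶜ, φ x * evalT T x := by
    rw [← Finset.sum_neg_distrib]
    refine Finset.sum_le_sum fun x _ => ?_
    have h1 : |φ x * evalT T x| ≤ |φ x| := by
      rw [abs_mul]
      exact mul_le_of_le_one_right (abs_nonneg _) (abs_evalT_le_one T hT x)
    exact (abs_le.1 h1).1
  have hle : ∑ x ∈ D, |φ x| ≤ 1 := by
    rw [← hnorm]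
    exact Finset.sum_le_univ_sum_of_nonneg fun _ => abs_nonneg _
  have hε' : 2 * ε * ∑ x ∈ D, |φ x| ≤ 2 * ε := mul_le_of_le_one_right (by linarith) hle
  have hsplit := Finset.sum_add_sum_compl D fun x => φ x * evalT T x
  linarith
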